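/- With the setup of the projection-slice identity (2-D signal x with on-grid coefficients a, line parameters (α0, α1, τ0, τ1), L = lcm(N0, N1), and slice DFT ŝ), suppose bin m ∈ {0,…,L−1} is 1-sparse: there is exactly one pair (m0, m1) with a(m0, m1) ≠ 0 and m0·α0/N0 + m1·α1/N1 − m/L an integer, and all other pairs (m0′, m1′) with a(m0′, m1′) ≠ 0 satisfy m0′·α0/N0 + m1′·α1/N1 − m/L ∉ ℤ. Then ŝ(m) = a(m0, m1)·exp(2πi·(m0·τ0/N0 + m1·τ1/N1)), and in particular ŝ(m) ≠ 0. -/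

import Mathlib

open Complex Finset
open scoped Classical

/-- The 2-D on-grid signal `x(n0,n1) = Σ_{(m0,m1)} a(m0,m1)·e^{2πi(m0·n0/N0 + m1·n1/N1)}`. -/
noncomputable def signal2D (N0 N1 : ℕ) (a : Fin N0 × Fin N1 → ℂ) (n0 n1 : ℤ) : ℂ :=
  ∑ p : Fin N0 × Fin N1, a p *
    Complex.exp (2 * (Real.pi : ℂ) * Complex.I *
      (((p.1 : ℕ) : ℂ) * (n0 : ℂ) / (N0 : ℂ) + ((p.2 : ℕ) : ℂ) * (n1 : ℂ) / (N1 : ℂ)))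

/-- The `L`-point DFT of the slice of the signal along the discrete line
`l ↦ (α0·l + τ0, α1·l + τ1)`, where `L = lcm(N0, N1)`. -/
noncomputable def sliceDFT (N0 N1 : ℕ) (a : Fin N0 × Fin N1 → ℂ)
    (α0 α1 τ0 τ1 : ℤ) (m : ℕ) : ℂ :=
  (1 / ((Nat.lcm N0 N1 : ℕ) : ℂ)) *
    ∑ l ∈ Finset.range (Nat.lcm N0 N1),
      signal2D N0 N1 a (α0 * l + τ0) (α1 * l + τ1) *
        Complex.exp (-(2 * (Real.pi : ℂ) * Complex.I * (l : ℂ) * (m : ℂ) /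
          ((Nat.lcm N0 N1 : ℕ) : ℂ)))

/-- The frequency grid point `(m0, m1)` projects onto bin `m`, i.e.
`m0·α0/N0 + m1·α1/N1 − m/L` is an integer. -/
def projectsTo (N0 N1 : ℕ) (α0 α1 : ℤ) (m : ℕ) (p : Fin N0 × Fin N1) : Prop :=
  ∃ k : ℤ, ((p.1 : ℕ) : ℝ) * (α0 : ℝ) / (N0 : ℝ) + ((p.2 : ℕ) : ℝ) * (α1 : ℝ) / (N1 : ℝ)
    - (m : ℝ) / ((Nat.lcm N0 N1 : ℕ) : ℝ) = (k : ℝ)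

/-!
Along the line, the grid frequency `p` rotates at the rate `p.1 * α0 / N0 + p.2 * α1 / N1` per step,
and the DFT kernel of bin `m` subtracts `m / L` from that rate. As `L` is a common multiple of `N0`
and `N1`, the resulting rotation is by an `L`-th root of unity, so its average over `L` steps is `1`
when the remaining rate is an integer and `0` otherwise. Hence `ŝ(m)` is the sum of the
contributions of exactly those frequencies that project onto `m`, and a single such contribution is
nonzero.
-/

theorem geom_sum_of_pow_eq_one {R : Type*} [Ring R] [NoZeroDivisors R] {z : R} {n : ℕ}
    (hz : z ^ n = 1) : ∑ l ∈ range n, z ^ l = if z = 1 then (n : R) else 0 := by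
  split_ifs with h
  · simp [h]
  · have hmul : (∑ l ∈ range n, z ^ l) * (z - 1) = 0 := by rw [geom_sum_mul, hz, sub_self]
    exact (mul_eq_zero.mp hmul).resolve_right (sub_ne_zero.mpr h)

theorem exp_two_pi_I_mul_eq_one_iff (x : ℂ) :
    exp (2 * Real.pi * I * x) = 1 ↔ ∃ k : ℤ, x = k := by
  simp only [exp_eq_one_iff, mul_comm _ (2 * (Real.pi : ℂ) * I),
    mul_right_inj' two_pi_I_ne_zero]

section Phase

variable {N0 N1 : ℕ} (p : Fin N0 × Fin N1)

/-- The phase, in full turns, of the grid frequency `p` at the sample `(n0, n1)`. It is taken in `ℂ`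
so that it can be used directly as an argument of `Complex.exp`. -/
noncomputable def gridPhase (n0 n1 : ℤ) : ℂ :=
  ((p.1 : ℕ) : ℂ) * n0 / N0 + ((p.2 : ℕ) : ℂ) * n1 / N1

/-- The rate, in turns per step along a line of direction `(α0, α1)`, at which the grid frequency
`p` rotates relative to the frequency `m / lcm N0 N1` of bin `m`. -/
noncomputable def binOffset (α0 α1 : ℤ) (m : ℕ) : ℂ :=
  gridPhase p α0 α1 - m / (Nat.lcm N0 N1 : ℕ)

theorem gridPhase_line (α0 α1 τ0 τ1 l : ℤ) :
    gridPhase p (α0 * l + τ0) (α1 * l + τ1) = l * gridPhase p α0 α1 + gridPhase p τ0 τ1 := by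
  unfold gridPhase
  push_cast
  ring

theorem exists_int_mul_gridPhase_eq {M : ℕ} (h0 : N0 ∣ M) (h1 : N1 ∣ M) (n0 n1 : ℤ) :
    ∃ k : ℤ, (M : ℂ) * gridPhase p n0 n1 = k := by
  have hN0 : (N0 : ℂ) ≠ 0 := Nat.cast_ne_zero.mpr p.1.pos.ne'
  have hN1 : (N1 : ℂ) ≠ 0 := Nat.cast_ne_zero.mpr p.2.pos.ne'
  obtain ⟨c, hc⟩ := h0
  obtain ⟨d, hd⟩ := h1
  have hMc : (M : ℂ) / N0 = c := by rw [hc, Nat.cast_mul, mul_div_cancel_left₀ _ hN0]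
  have hMd : (M : ℂ) / N1 = d := by rw [hd, Nat.cast_mul, mul_div_cancel_left₀ _ hN1]
  refine ⟨c * ((p.1 : ℕ) * n0) + d * ((p.2 : ℕ) * n1), ?_⟩
  push_cast
  rw [gridPhase, ← hMc, ← hMd]
  ring

theorem projectsTo_iff_exists_binOffset_eq (α0 α1 : ℤ) (m : ℕ) :
    projectsTo N0 N1 α0 α1 m p ↔ ∃ k : ℤ, binOffset p α0 α1 m = k := by
  refine exists_congr fun k => ?_
  rw [← ofReal_inj, binOffset, gridPhase]
  push_cast
  rfl

theorem exp_binOffset_pow_lcm (α0 α1 : ℤ) (m : ℕ) :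
    exp (2 * Real.pi * I * binOffset p α0 α1 m) ^ Nat.lcm N0 N1 = 1 := by
  have hL : ((Nat.lcm N0 N1 : ℕ) : ℂ) ≠ 0 :=
    Nat.cast_ne_zero.mpr (Nat.lcm_ne_zero p.1.pos.ne' p.2.pos.ne')
  obtain ⟨k, hk⟩ := exists_int_mul_gridPhase_eq p (Nat.dvd_lcm_left N0 N1)
    (Nat.dvd_lcm_right N0 N1) α0 α1
  rw [← exp_nat_mul, mul_left_comm, exp_two_pi_I_mul_eq_one_iff]
  refine ⟨k - m, ?_⟩
  rw [binOffset, mul_sub, hk, mul_div_cancel₀ _ hL]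
  push_cast
  rfl

theorem sum_exp_binOffset_pow (α0 α1 : ℤ) (m : ℕ) :
    ∑ l ∈ range (Nat.lcm N0 N1), exp (2 * Real.pi * I * binOffset p α0 α1 m) ^ l =
      if projectsTo N0 N1 α0 α1 m p then ((Nat.lcm N0 N1 : ℕ) : ℂ) else 0 := by
  simp only [geom_sum_of_pow_eq_one (exp_binOffset_pow_lcm p α0 α1 m),
    exp_two_pi_I_mul_eq_one_iff, projectsTo_iff_exists_binOffset_eq]

end Phase

section Slice

variable (N0 N1 : ℕ) (a : Fin N0 × Fin N1 → ℂ) (α0 α1 τ0 τ1 : ℤ) (m : ℕ)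

theorem signal2D_line_mul_exp (l : ℕ) :
    signal2D N0 N1 a (α0 * l + τ0) (α1 * l + τ1) *
        exp (-(2 * Real.pi * I * l * m / (Nat.lcm N0 N1 : ℕ))) =
      ∑ p, a p * exp (2 * Real.pi * I * gridPhase p τ0 τ1) *
        exp (2 * Real.pi * I * binOffset p α0 α1 m) ^ l := by
  rw [signal2D, sum_mul]
  refine sum_congr rfl fun p _ => ?_
  rw [← gridPhase, gridPhase_line, ← exp_nat_mul, mul_assoc (a p), mul_assoc (a p), ← exp_add,
    ← exp_add, binOffset]
  congr 2
  push_cast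
  ring

theorem sliceDFT_eq_sum_projectsTo :
    sliceDFT N0 N1 a α0 α1 τ0 τ1 m =
      ∑ p with projectsTo N0 N1 α0 α1 m p,
        a p * exp (2 * Real.pi * I * gridPhase p τ0 τ1) := by
  simp only [sliceDFT, signal2D_line_mul_exp]
  rw [sum_comm, mul_sum, sum_filter]
  refine sum_congr rfl fun p _ => ?_
  have hL : ((Nat.lcm N0 N1 : ℕ) : ℂ) ≠ 0 :=
    Nat.cast_ne_zero.mpr (Nat.lcm_ne_zero p.1.pos.ne' p.2.pos.ne')
  rw [← mul_sum, sum_exp_binOffset_pow]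
  split_ifs
  · rw [mul_left_comm, one_div_mul_cancel hL, mul_one]
  · rw [mul_zero, mul_zero]

end Slice

theorem fps_sft_one_sparse_bin_general
    (N0 N1 : ℕ) (a : Fin N0 × Fin N1 → ℂ) (α0 α1 τ0 τ1 : ℤ) (m : ℕ)
    (p₀ : Fin N0 × Fin N1) (ha : a p₀ ≠ 0)
    (hproj : projectsTo N0 N1 α0 α1 m p₀)
    (huniq : ∀ q : Fin N0 × Fin N1, a q ≠ 0 → projectsTo N0 N1 α0 α1 m q → q = p₀) :
    sliceDFT N0 N1 a α0 α1 τ0 τ1 m = a p₀ * exp (2 * Real.pi * I * gridPhase p₀ τ0 τ1) ∧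
      sliceDFT N0 N1 a α0 α1 τ0 τ1 m ≠ 0 := by
  have hvalue : sliceDFT N0 N1 a α0 α1 τ0 τ1 m =
      a p₀ * exp (2 * Real.pi * I * gridPhase p₀ τ0 τ1) := by
    rw [sliceDFT_eq_sum_projectsTo]
    refine sum_eq_single_of_mem p₀ (mem_filter_univ p₀ |>.mpr hproj) fun q hq hne => ?_
    have haq : a q = 0 := by
      by_contra haq
      exact hne (huniq q haq ((mem_filter_univ q).mp hq))
    rw [haq, zero_mul]
  exact ⟨hvalue, hvalue ▸ mul_ne_zero ha (exp_ne_zero _)⟩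

/-- **Value of a 1-sparse bin.** If bin `m` is 1-sparse — exactly one pair
`(m0, m1)` with `a(m0,m1) ≠ 0` projects onto it — then
`ŝ(m) = a(m0,m1)·e^{2πi(m0·τ0/N0 + m1·τ1/N1)}`, and in particular `ŝ(m) ≠ 0`. -/
theorem fps_sft_one_sparse_bin
    (N0 N1 : ℕ) (hN0 : 0 < N0) (hN1 : 0 < N1)
    (a : Fin N0 × Fin N1 → ℂ) (α0 α1 τ0 τ1 : ℤ)
    (m : ℕ) (hm : m ∈ Finset.range (Nat.lcm N0 N1))
    (p₀ : Fin N0 × Fin N1) (ha : a p₀ ≠ 0)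
    (hproj : projectsTo N0 N1 α0 α1 m p₀)
    (huniq : ∀ q : Fin N0 × Fin N1, a q ≠ 0 → projectsTo N0 N1 α0 α1 m q → q = p₀) :
    sliceDFT N0 N1 a α0 α1 τ0 τ1 m =
      a p₀ * Complex.exp (2 * (Real.pi : ℂ) * Complex.I *
        (((p₀.1 : ℕ) : ℂ) * (τ0 : ℂ) / (N0 : ℂ) + ((p₀.2 : ℕ) : ℂ) * (τ1 : ℂ) / (N1 : ℂ))) ∧
    sliceDFT N0 N1 a α0 α1 τ0 τ1 m ≠ 0 :=
  fps_sft_one_sparse_bin_general N0 N1 a α0 α1 τ0 τ1 m p₀ ha hproj huniq
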